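/- Let d ≥ 2 and a > 2b > 0, and let y ∈ S₀. Then the solution v_y of the linearized equation vanishes exactly once on (0, ∞). -/

import Mathlib

/-!
The Wronskian `W(w, v) = r ^ (d - 1) (w v' - w' v)` compares `v` with two functions built from
the ground state `u`. Against `u' < 0`, `W(u', v)` increases from zero as long as `v > 0`. As the
flux `r ^ (d - 1) u'` is bounded, `v` then cannot stay positive, and `v' < 0` at its first zero
`ρ`.

Against `r u' + c u`, with `c > 0` chosen so that this function vanishes at `ρ`, the derivative of
the Wronskian is `-r ^ (d - 1) (c u F'(u) - (c + 2) F(u)) v`. Since `z F'(z) / F(z)` is decreasing,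
the bracket changes sign at most once along the decreasing function `u`. The Wronskian vanishes
at `0` and `ρ`, so the change takes place before `ρ`. If `v` had a next zero `σ`, the Wronskian
would increase on `[ρ, σ]`, giving `σ u'(σ) + c u(σ) > 0`. But Pohozaev's identity, with the
resulting bound `2 ∫₀ᶻ F ≤ z F(z)` for `z < u(ρ)`, makes `r u' / u` nonincreasing beyond `ρ`, a
contradiction.
-/

open Real Filter

noncomputable section

/-- The nonlinearity `F(x) = (a/2)·sin(2x)·(sin²x − b/a)`. -/
def Fnl (a b x : ℝ) : ℝ := (a / 2) * Real.sin (2 * x) * (Real.sin x ^ 2 - b / a)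

/-- `u` solves the radial ODE `u'' + ((d−1)/r)u' + F(u) = 0` on `(0,∞)` with `u'(0) = 0`. -/
def IsRadialSol (d : ℕ) (a b : ℝ) (u : ℝ → ℝ) : Prop :=
  ContDiff ℝ 2 u ∧ deriv u 0 = 0 ∧
  ∀ r : ℝ, 0 < r →
    deriv (deriv u) r + (((d : ℝ) - 1) / r) * deriv u r + Fnl a b (u r) = 0

/-- `u` is the family of solutions of the radial ODE with `u y 0 = y`, `(u y)'(0) = 0`. -/
def IsShootingFamily (d : ℕ) (a b : ℝ) (u : ℝ → ℝ → ℝ) : Prop :=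
  ∀ y ∈ Set.Ioo (0 : ℝ) (Real.pi / 2), IsRadialSol d a b (u y) ∧ u y 0 = y

/-- `S₊`: initial data whose solution stays bounded away from zero. -/
def Splus (u : ℝ → ℝ → ℝ) : Set ℝ :=
  {y | y ∈ Set.Ioo (0 : ℝ) (Real.pi / 2) ∧ ∃ ε > (0 : ℝ), ∀ r : ℝ, 0 ≤ r → ε ≤ u y r}

/-- `S₀`: initial data whose solution is positive and tends to zero at infinity. -/
def Szero (u : ℝ → ℝ → ℝ) : Set ℝ :=
  {y | y ∈ Set.Ioo (0 : ℝ) (Real.pi / 2) ∧ (∀ r : ℝ, 0 ≤ r → 0 < u y r) ∧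
    Tendsto (u y) atTop (nhds 0)}

/-- `S₋`: initial data whose solution vanishes at some positive radius. -/
def Sminus (u : ℝ → ℝ → ℝ) : Set ℝ :=
  {y | y ∈ Set.Ioo (0 : ℝ) (Real.pi / 2) ∧ ∃ r > (0 : ℝ), u y r = 0}

/-- `v` solves the linearized equation `v'' + ((d−1)/r)v' + F'(w)v = 0`
with `v(0) = 1`, `v'(0) = 0`. -/
def IsLinearizedSol (d : ℕ) (a b : ℝ) (w v : ℝ → ℝ) : Prop :=
  ContDiff ℝ 2 v ∧ v 0 = 1 ∧ deriv v 0 = 0 ∧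
  ∀ r : ℝ, 0 < r →
    deriv (deriv v) r + (((d : ℝ) - 1) / r) * deriv v r
      + deriv (Fnl a b) (w r) * v r = 0

open Set Topology

section RealAnalysis

variable {g g' : ℝ → ℝ} {s t r k : ℝ}

lemma exists_first_zero_of_eventually_neg (hg : Continuous g) (hst : s < t)
    (hneg : ∀ᶠ x in 𝓝[>] s, g x < 0) (ht : 0 ≤ g t) :
    ∃ r ∈ Ioc s t, g r = 0 ∧ ∀ x ∈ Ioo s r, g x < 0 := by
  obtain ⟨δ, hδ, hδneg⟩ := mem_nhdsGT_iff_exists_Ioo_subset.1 hneg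
  obtain ⟨c, hsc, hc⟩ := exists_between (lt_min hδ hst)
  obtain ⟨hcδ, hct⟩ := lt_min_iff.1 hc
  have hgc : g c < 0 := hδneg ⟨hsc, hcδ⟩
  have exists_zero {x : ℝ} (hcx : c ≤ x) (hx : 0 ≤ g x) : ∃ z ∈ Icc c x, g z = 0 :=
    intermediate_value_Icc hcx hg.continuousOn ⟨hgc.le, hx⟩
  have hcompact : IsCompact (Icc c t ∩ g ⁻¹' {0}) :=
    isCompact_Icc.inter_right (isClosed_singleton.preimage hg)
  obtain ⟨r, ⟨⟨hcr, hrt⟩, hr⟩, hleast⟩ := hcompact.exists_isLeast (exists_zero hct.le ht)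
  refine ⟨r, ⟨hsc.trans_le hcr, hrt⟩, hr, fun x hx => ?_⟩
  rcases lt_or_ge x c with hxc | hcx
  · exact hδneg ⟨hx.1, hxc.trans hcδ⟩
  · by_contra! hgx
    obtain ⟨z, hz, hgz⟩ := exists_zero hcx hgx
    exact (hz.2.trans_lt hx.2).not_ge (hleast ⟨⟨hz.1, by linarith [hz.2, hx.2]⟩, hgz⟩)

lemma eventually_neg_nhdsGT_of_deriv_neg (hg : g s = 0) (hg' : deriv g s < 0) :
    ∀ᶠ x in 𝓝[>] s, g x < 0 := by
  filter_upwards [(eventually_nhdsWithin_sign_eq_of_deriv_neg hg' hg).filter_mono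
    nhdsWithin_le_nhds, self_mem_nhdsWithin] with x hx hsx
  exact sign_eq_neg_one_iff.1 (hx.trans (sign_neg (sub_neg.2 hsx)))

lemma deriv_nonneg_of_forall_Ioo_neg (hst : s < t) (hg : g t = 0)
    (hneg : ∀ x ∈ Ioo s t, g x < 0) : 0 ≤ deriv g t := by
  by_contra! hg'
  have hpos : ∀ᶠ x in 𝓝[<] t, 0 < g x := by
    filter_upwards [(eventually_nhdsWithin_sign_eq_of_deriv_neg hg' hg).filter_mono
      nhdsWithin_le_nhds, self_mem_nhdsWithin] with x hx hxt
    exact sign_eq_one_iff.1 (hx.trans (sign_pos (sub_pos.2 hxt)))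
  obtain ⟨x, hx, hxneg⟩ := (hpos.and (Ioo_mem_nhdsLT hst)).exists
  exact (hneg x hxneg).not_gt hx

lemma exists_pos_of_le_deriv (hk : 0 < k) (hg : ∀ x ∈ Ici s, HasDerivAt g (g' x) x)
    (hg' : ∀ x ∈ Ici s, k ≤ g' x) : ∃ t ≥ s, 0 < g t := by
  have hgrowth (t : ℝ) (ht : s ≤ t) : k * (t - s) ≤ g t - g s := by
    refine (convex_Ici s).mul_sub_le_image_sub_of_le_deriv
      (fun x hx => (hg x hx).continuousAt.continuousWithinAt)
      (fun x hx => (hg x (interior_subset hx)).differentiableAt.differentiableWithinAt)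
      (fun x hx => ?_) s self_mem_Ici t ht ht
    rw [(hg x (interior_subset hx)).deriv]
    exact hg' x (interior_subset hx)
  have hlim : Tendsto (fun t => g s + k * (t - s)) atTop atTop :=
    tendsto_atTop_add_const_left _ _
      ((tendsto_atTop_add_const_right _ (-s) tendsto_id).const_mul_atTop hk)
  obtain ⟨t, hst, ht⟩ := ((eventually_ge_atTop s).and (hlim.eventually_gt_atTop 0)).exists
  exact ⟨t, hst, by linarith [hgrowth t hst]⟩

lemma hasDerivAt_rpow_mul {y : ℝ} (k : ℝ) (hr : 0 < r) (hg : HasDerivAt g y r) :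
    HasDerivAt (fun x => x ^ k * g x) (r ^ k * (y + k / r * g r)) r := by
  refine ((hasDerivAt_rpow_const (Or.inl hr.ne')).mul hg).congr_deriv ?_
  rw [rpow_sub_one hr.ne']
  ring

end RealAnalysis

/-- The potential energy `x ↦ ∫₀ˣ f` of a nonlinearity `f`. -/
def potential (f : ℝ → ℝ) (x : ℝ) : ℝ := ∫ t in (0 : ℝ)..x, f t

section Potential

variable {f : ℝ → ℝ} {x : ℝ}

lemma potential_zero (f : ℝ → ℝ) : potential f 0 = 0 := intervalIntegral.integral_same

lemma hasDerivAt_potential (hf : Continuous f) (x : ℝ) : HasDerivAt (potential f) (f x) x :=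
  (hf.integral_hasStrictDerivAt 0 x).hasDerivAt

lemma continuous_potential (hf : Continuous f) : Continuous (potential f) :=
  continuous_iff_continuousAt.2 fun x => (hasDerivAt_potential hf x).continuousAt

lemma two_mul_potential_le_mul (hf : Differentiable ℝ f) (hx : 0 ≤ x)
    (h : ∀ z ∈ Ioo 0 x, f z ≤ z * deriv f z) : 2 * potential f x ≤ x * f x := by
  have hmono : MonotoneOn (fun z => z * f z - 2 * potential f z) (Icc 0 x) := by
    have hderiv (z : ℝ) : HasDerivAt (fun z => z * f z - 2 * potential f z)
        (z * deriv f z - f z) z := by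
      refine (((hasDerivAt_id z).mul (hf z).hasDerivAt).sub
        ((hasDerivAt_potential hf.continuous z).const_mul 2)).congr_deriv ?_
      simp only [id]
      ring
    exact monotoneOn_of_hasDerivWithinAt_nonneg (convex_Icc 0 x)
      (fun z _ => (hderiv z).continuousAt.continuousWithinAt)
      (fun z _ => (hderiv z).hasDerivWithinAt)
      fun z hz => sub_nonneg.2 (h z (interior_Icc.subset hz))
  have := hmono (left_mem_Icc.2 hx) (right_mem_Icc.2 hx) hx
  simp only [zero_mul, potential_zero, mul_zero, sub_zero] at this
  linarith

end Potential

/-- A nonlinearity of Serrin–Tang type on `(0, M)`: it is negative below `α` and positive above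
it, satisfies `f(z) < z f'(z)` up to `α`, and its growth function `z f'(z) / f(z)` is strictly
decreasing beyond `α`. Together these make `A z f'(z) - B f(z)` change sign at most once on
`(0, M)` whenever `0 ≤ A < B`, which is what uniqueness arguments use. -/
structure IsSerrinTang (f : ℝ → ℝ) (α M : ℝ) : Prop where
  differentiable : Differentiable ℝ f
  threshold_pos : 0 < α
  apply_threshold : f α = 0
  neg_of_lt : ∀ z ∈ Ioo 0 α, f z < 0
  pos_of_gt : ∀ z ∈ Ioo α M, 0 < f z
  lt_mul_deriv : ∀ z ∈ Ioc 0 α, f z < z * deriv f z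
  growth_strictAntiOn : StrictAntiOn (fun z => z * logDeriv f z) (Ioo α M)

namespace IsSerrinTang

variable {f : ℝ → ℝ} {α M A B p z : ℝ}

lemma nonpos_of_le (hf : IsSerrinTang f α M) (hz : z ∈ Ioc 0 α) : f z ≤ 0 := by
  rcases hz.2.lt_or_eq with hlt | rfl
  · exact (hf.neg_of_lt z ⟨hz.1, hlt⟩).le
  · exact hf.apply_threshold.le

lemma threshold_lt_of_potential_nonneg (hf : IsSerrinTang f α M) (hz : 0 < z)
    (hpot : 0 ≤ potential f z) : α < z := by
  by_contra! hzα
  have : 0 < ∫ t in (0 : ℝ)..z, -f t :=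
    intervalIntegral.intervalIntegral_pos_of_pos_on
      (hf.differentiable.continuous.neg.intervalIntegrable 0 z)
      (fun t ht => neg_pos.2 (hf.neg_of_lt t ⟨ht.1, ht.2.trans_le hzα⟩)) hz
  rw [intervalIntegral.integral_neg] at this
  exact hpot.not_gt (neg_pos.1 this)

lemma single_crossing (hf : IsSerrinTang f α M) (hA : 0 ≤ A) (hAB : A < B) (hp : 0 < p)
    (hpz : p < z) (hz : z < M) (h : A * (p * deriv f p) ≤ B * f p) :
    A * (z * deriv f z) < B * f z := by
  have hB : 0 < B := hA.trans_lt hAB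
  rcases hA.eq_or_lt with rfl | hA
  · have hαp : α ≤ p := by
      by_contra! hpα
      nlinarith [hf.neg_of_lt p ⟨hp, hpα⟩]
    have := hf.pos_of_gt z ⟨hαp.trans_lt hpz, hz⟩
    simpa using mul_pos hB this
  · have hαp : α < p := by
      by_contra! hpα
      have hle : f p ≤ 0 := hf.nonpos_of_le ⟨hp, hpα⟩
      have hlt : f p < p * deriv f p := hf.lt_mul_deriv p ⟨hp, hpα⟩
      nlinarith
    have hfp := hf.pos_of_gt p ⟨hαp, hpz.trans hz⟩
    have hfz := hf.pos_of_gt z ⟨hαp.trans hpz, hz⟩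
    have hgrowth : z * deriv f z / f z < p * deriv f p / f p := by
      simpa only [logDeriv_apply, mul_div_assoc] using
        hf.growth_strictAntiOn ⟨hαp, hpz.trans hz⟩ ⟨hαp.trans hpz, hz⟩ hpz
    have hp_le : p * deriv f p / f p ≤ B / A := by
      rw [div_le_div_iff₀ hfp hA]
      linarith
    have hz_lt := hgrowth.trans_le hp_le
    rw [div_lt_div_iff₀ hfz hA] at hz_lt
    linarith

lemma mul_lt_mul_deriv_of_lt (hf : IsSerrinTang f α M) (hA : 0 ≤ A) (hAB : A < B) (hz : 0 < z)
    (hzp : z < p) (hp : p < M) (h : B * f p < A * (p * deriv f p)) :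
    B * f z < A * (z * deriv f z) := by
  by_contra! hle
  exact (hf.single_crossing hA hAB hz hzp hp hle).not_gt h

lemma le_mul_deriv_of_lt (hf : IsSerrinTang f α M) (hA : 0 ≤ A) (hAB : A < B) (hz : 0 < z)
    (hzp : z < p) (hp : p < M) (h : B * f p < A * (p * deriv f p)) : f z ≤ z * deriv f z := by
  rcases le_or_gt z α with hzα | hzα
  · exact (hf.lt_mul_deriv z ⟨hz, hzα⟩).le
  · have hfz : 0 < f z := hf.pos_of_gt z ⟨hzα, hzp.trans hp⟩
    refine (lt_of_mul_lt_mul_left ?_ hA).le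
    calc A * f z < B * f z := mul_lt_mul_of_pos_right hAB hfz
      _ < A * (z * deriv f z) := hf.mul_lt_mul_deriv_of_lt hA hAB hz hzp hp h

end IsSerrinTang

/-- The density `2d ∫₀ᶻ f - (d - 2) z f(z)` of the right-hand side of Pohozaev's identity in
dimension `d`. -/
def pohozaevDensity (d : ℝ) (f : ℝ → ℝ) (z : ℝ) : ℝ :=
  2 * d * potential f z - (d - 2) * (z * f z)

lemma hasDerivAt_pohozaevDensity {d : ℝ} {f : ℝ → ℝ} (hf : Differentiable ℝ f) (z : ℝ) :
    HasDerivAt (pohozaevDensity d f) ((d + 2) * f z - (d - 2) * (z * deriv f z)) z := by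
  refine (((hasDerivAt_potential hf.continuous z).const_mul (2 * d)).sub
    (((hasDerivAt_id z).mul (hf z).hasDerivAt).const_mul (d - 2))).congr_deriv ?_
  simp only [id]
  ring

lemma IsSerrinTang.pohozaevDensity_nonneg_of_le {d : ℝ} {f : ℝ → ℝ} {α M p z : ℝ}
    (hf : IsSerrinTang f α M) (hd : 2 ≤ d) (hp : 0 < p) (hpz : p ≤ z) (hz : z < M)
    (h : 0 ≤ pohozaevDensity d f p) : 0 ≤ pohozaevDensity d f z := by
  have hderiv := hasDerivAt_pohozaevDensity (d := d) hf.differentiable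
  have hcont : Continuous (pohozaevDensity d f) :=
    continuous_iff_continuousAt.2 fun x => (hderiv x).continuousAt
  obtain ⟨q, hq, hslope⟩ :=
    exists_hasDerivAt_eq_slope _ _ hp hcont.continuousOn fun x _ => hderiv x
  have hq_nonneg : 0 ≤ (d + 2) * f q - (d - 2) * (q * deriv f q) := by
    rw [hslope, show pohozaevDensity d f 0 = 0 by simp [pohozaevDensity, potential_zero]]
    simpa using div_nonneg h hp.le
  have hmono : MonotoneOn (pohozaevDensity d f) (Icc q z) := by
    refine monotoneOn_of_hasDerivWithinAt_nonneg (convex_Icc q z) hcont.continuousOn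
      (fun x _ => (hderiv x).hasDerivWithinAt) fun x hx => ?_
    replace hx := interior_Icc.subset hx
    have := hf.single_crossing (A := d - 2) (B := d + 2) (by linarith) (by linarith) hq.1 hx.1
      (hx.2.trans hz) (by linarith)
    linarith
  exact h.trans (hmono ⟨hq.2.le, hpz⟩ ⟨hq.2.le.trans hpz, le_rfl⟩ hpz)

/-- The radial part `w'' + ((d - 1) / r) w'` of the Laplacian in (real) dimension `d`; only its
values at `r > 0` are meaningful. -/
def radialLaplacian (d : ℝ) (w : ℝ → ℝ) (r : ℝ) : ℝ :=
  deriv (deriv w) r + (d - 1) / r * deriv w r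

/-- The Wronskian of two radial functions, weighted by `r ^ (d - 1)` so that Lagrange's identity
holds for the radial Laplacian. -/
def radialWronskian (d : ℝ) (w v : ℝ → ℝ) (r : ℝ) : ℝ :=
  r ^ (d - 1) * (w r * deriv v r - deriv w r * v r)

section RadialWronskian

variable {d r : ℝ} {w v : ℝ → ℝ}

lemma hasDerivAt_radialWronskian (hr : 0 < r) (hw : DifferentiableAt ℝ w r)
    (hw' : DifferentiableAt ℝ (deriv w) r) (hv : DifferentiableAt ℝ v r)
    (hv' : DifferentiableAt ℝ (deriv v) r) :
    HasDerivAt (radialWronskian d w v)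
      (r ^ (d - 1) * (w r * radialLaplacian d v r - radialLaplacian d w r * v r)) r := by
  refine (hasDerivAt_rpow_mul (d - 1) hr ((hw.hasDerivAt.mul hv'.hasDerivAt).sub
    (hw'.hasDerivAt.mul hv.hasDerivAt))).congr_deriv ?_
  simp only [radialLaplacian, Pi.sub_apply, Pi.mul_apply]
  ring

lemma continuous_radialWronskian (hd : 1 ≤ d) (hw : ContDiff ℝ 1 w) (hv : ContDiff ℝ 1 v) :
    Continuous (radialWronskian d w v) :=
  (continuous_rpow_const (by linarith)).mul
    ((hw.continuous.mul hv.continuous_deriv_one).sub (hw.continuous_deriv_one.mul hv.continuous))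

lemma radialWronskian_zero (hd : 1 < d) (w v : ℝ → ℝ) : radialWronskian d w v 0 = 0 := by
  rw [radialWronskian, zero_rpow (by linarith), zero_mul]

end RadialWronskian

/-- The generator `r w' + c w` of the scaling `w ↦ λ ^ c w(λ r)`, at `λ = 1`. -/
def scalingGenerator (c : ℝ) (w : ℝ → ℝ) (r : ℝ) : ℝ := r * deriv w r + c * w r

lemma scalingGenerator_eq_mul {c r : ℝ} {w : ℝ → ℝ} (hw : w r ≠ 0) :
    scalingGenerator c w r = (r * logDeriv w r + c) * w r := by
  rw [scalingGenerator, logDeriv_apply]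
  field_simp

/-- `u` is a `C²` solution of `u'' + ((d - 1) / r) u' + f(u) = 0` on `(0, ∞)` with `u'(0) = 0`,
the dimension `d` being any real number. -/
structure SolvesRadialODE (d : ℝ) (f u : ℝ → ℝ) : Prop where
  contDiff : ContDiff ℝ 2 u
  deriv_zero : deriv u 0 = 0
  radialLaplacian_add : ∀ r, 0 < r → radialLaplacian d u r + f (u r) = 0

/-- `v` is a `C²` solution on `(0, ∞)` of the linearization
`v'' + ((d - 1) / r) v' + f'(u) v = 0` of the radial equation at `u`. -/
structure SolvesLinearizedODE (d : ℝ) (f u v : ℝ → ℝ) : Prop where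
  contDiff : ContDiff ℝ 2 v
  radialLaplacian_add : ∀ r, 0 < r → radialLaplacian d v r + deriv f (u r) * v r = 0

/-- The energy `u'² / 2 + ∫₀ᵘ f` of a radial solution at radius `r`. -/
def radialEnergy (f u : ℝ → ℝ) (r : ℝ) : ℝ := deriv u r ^ 2 / 2 + potential f (u r)

/-- Pohozaev's functional in dimension `d`, the combination of the dilation and scaling
multipliers `r u'` and `u` in which the derivative of `u` drops out of the right-hand side. -/
def pohozaev (d : ℝ) (f u : ℝ → ℝ) (r : ℝ) : ℝ :=
  r ^ (d - 1) * (r * deriv u r ^ 2 + (d - 2) * (u r * deriv u r) + 2 * (r * potential f (u r)))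

namespace SolvesRadialODE

variable {d r s t : ℝ} {f u : ℝ → ℝ}

lemma hasDerivAt (hu : SolvesRadialODE d f u) (r : ℝ) : HasDerivAt u (deriv u r) r :=
  (hu.contDiff.differentiable two_ne_zero r).hasDerivAt

lemma contDiff_deriv (hu : SolvesRadialODE d f u) : ContDiff ℝ 1 (deriv u) :=
  ContDiff.deriv' (n := 1) hu.contDiff

lemma deriv_deriv (hu : SolvesRadialODE d f u) (hr : 0 < r) :
    deriv (deriv u) r = -((d - 1) / r * deriv u r) - f (u r) := by
  have := hu.radialLaplacian_add r hr
  rw [radialLaplacian] at this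
  linarith

lemma hasDerivAt_deriv (hu : SolvesRadialODE d f u) (hr : 0 < r) :
    HasDerivAt (deriv u) (-((d - 1) / r * deriv u r) - f (u r)) r :=
  hu.deriv_deriv hr ▸ (hu.contDiff.differentiable_deriv_two r).hasDerivAt

lemma hasDerivAt_deriv_deriv (hu : SolvesRadialODE d f u) (hf : DifferentiableAt ℝ f (u r))
    (hr : 0 < r) :
    HasDerivAt (deriv (deriv u)) ((d - 1) / r ^ 2 * deriv u r
      - (d - 1) / r * deriv (deriv u) r - deriv f (u r) * deriv u r) r := by
  have hev : deriv (deriv u) =ᶠ[𝓝 r] fun x => -((d - 1) / x * deriv u x) - f (u x) := by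
    filter_upwards [lt_mem_nhds hr] with x hx using hu.deriv_deriv hx
  refine (((((hasDerivAt_const r (d - 1)).div (hasDerivAt_id r) hr.ne').mul
    (hu.contDiff.differentiable_deriv_two r).hasDerivAt).neg.sub
    (hf.hasDerivAt.comp r (hu.hasDerivAt r))).congr_of_eventuallyEq hev).congr_deriv ?_
  simp only [id, Pi.div_apply]
  field_simp
  ring

lemma radialLaplacian_deriv (hu : SolvesRadialODE d f u) (hf : DifferentiableAt ℝ f (u r))
    (hr : 0 < r) :
    radialLaplacian d (deriv u) r = (d - 1) / r ^ 2 * deriv u r - deriv f (u r) * deriv u r := by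
  rw [radialLaplacian, (hu.hasDerivAt_deriv_deriv hf hr).deriv]
  ring

lemma deriv_scalingGenerator (hu : SolvesRadialODE d f u) (c : ℝ) :
    deriv (scalingGenerator c u) = fun r => r * deriv (deriv u) r + (1 + c) * deriv u r := by
  ext r
  refine ((((hasDerivAt_id r).mul (hu.contDiff.differentiable_deriv_two r).hasDerivAt).add
    ((hu.hasDerivAt r).const_mul c)).congr_deriv ?_).deriv
  simp only [id]
  ring

lemma contDiff_scalingGenerator (hu : SolvesRadialODE d f u) (c : ℝ) :
    ContDiff ℝ 1 (scalingGenerator c u) :=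
  (contDiff_id.mul hu.contDiff_deriv).add
    (contDiff_const.mul (hu.contDiff.of_le one_le_two))

lemma hasDerivAt_deriv_scalingGenerator (hu : SolvesRadialODE d f u)
    (hf : DifferentiableAt ℝ f (u r)) (c : ℝ) (hr : 0 < r) :
    HasDerivAt (deriv (scalingGenerator c u))
      ((c + 3 - d) * deriv (deriv u) r + (d - 1) / r * deriv u r
        - r * (deriv f (u r) * deriv u r)) r := by
  rw [hu.deriv_scalingGenerator]
  refine (((hasDerivAt_id r).mul (hu.hasDerivAt_deriv_deriv hf hr)).add
    ((hu.contDiff.differentiable_deriv_two r).hasDerivAt.const_mul (1 + c))).congr_deriv ?_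
  simp only [id]
  field_simp
  ring

lemma radialLaplacian_scalingGenerator (hu : SolvesRadialODE d f u)
    (hf : DifferentiableAt ℝ f (u r)) (c : ℝ) (hr : 0 < r) :
    radialLaplacian d (scalingGenerator c u) r
      = -(r * deriv f (u r) * deriv u r) - (c + 2) * f (u r) := by
  rw [radialLaplacian, (hu.hasDerivAt_deriv_scalingGenerator hf c hr).deriv]
  simp only [hu.deriv_scalingGenerator, hu.deriv_deriv hr]
  field_simp
  ring

lemma hasDerivAt_flux (hu : SolvesRadialODE d f u) (hr : 0 < r) :
    HasDerivAt (fun x => x ^ (d - 1) * deriv u x) (-(r ^ (d - 1) * f (u r))) r :=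
  (hasDerivAt_rpow_mul (d - 1) hr (hu.hasDerivAt_deriv hr)).congr_deriv (by ring)

lemma continuous_flux (hu : SolvesRadialODE d f u) (hd : 1 ≤ d) :
    Continuous fun x => x ^ (d - 1) * deriv u x :=
  (continuous_rpow_const (by linarith)).mul hu.contDiff_deriv.continuous

lemma deriv_neg_of_forall_pos (hu : SolvesRadialODE d f u) (hd : 1 < d) (hr : 0 < r)
    (hpos : ∀ x ∈ Ioo 0 r, 0 < f (u x)) : deriv u r < 0 := by
  have hanti : StrictAntiOn (fun x => x ^ (d - 1) * deriv u x) (Icc 0 r) := by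
    refine strictAntiOn_of_hasDerivWithinAt_neg (convex_Icc 0 r)
      (hu.continuous_flux hd.le).continuousOn
      (f' := fun x => -(x ^ (d - 1) * f (u x))) (fun x hx => ?_) fun x hx => ?_ <;>
    replace hx := interior_Icc.subset hx
    · exact (hu.hasDerivAt_flux hx.1).hasDerivWithinAt
    · exact neg_neg_of_pos (mul_pos (rpow_pos_of_pos hx.1 _) (hpos x hx))
  have hflux := hanti (left_mem_Icc.2 hr.le) (right_mem_Icc.2 hr.le) hr
  simp only [hu.deriv_zero, mul_zero] at hflux
  exact neg_of_mul_neg_right hflux (rpow_nonneg hr.le _)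

lemma strictAntiOn_Icc_of_deriv_neg (hu : SolvesRadialODE d f u)
    (hneg : ∀ x ∈ Ioo s t, deriv u x < 0) : StrictAntiOn u (Icc s t) :=
  strictAntiOn_of_deriv_neg (convex_Icc s t) hu.contDiff.continuous.continuousOn
    fun x hx => hneg x (interior_Icc.subset hx)

lemma hasDerivAt_potential_comp (hu : SolvesRadialODE d f u) (hf : Continuous f) (r : ℝ) :
    HasDerivAt (fun x => potential f (u x)) (f (u r) * deriv u r) r :=
  (hasDerivAt_potential hf (u r)).comp r (hu.hasDerivAt r)

lemma antitoneOn_radialEnergy (hu : SolvesRadialODE d f u) (hf : Continuous f) (hd : 1 ≤ d) :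
    AntitoneOn (radialEnergy f u) (Ici 0) := by
  have hcont : Continuous (radialEnergy f u) :=
    ((hu.contDiff_deriv.continuous.pow 2).div_const 2).add
      ((continuous_potential hf).comp hu.contDiff.continuous)
  have hderiv (r : ℝ) (hr : 0 < r) :
      HasDerivAt (radialEnergy f u) (-((d - 1) / r * deriv u r ^ 2)) r := by
    refine ((((hu.hasDerivAt_deriv hr).pow 2).div_const 2).add
      (hu.hasDerivAt_potential_comp hf r)).congr_deriv ?_
    push_cast
    ring
  exact antitoneOn_of_hasDerivWithinAt_nonpos (convex_Ici 0) hcont.continuousOn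
    (fun r hr => (hderiv r (interior_Ici.subset hr)).hasDerivWithinAt)
    fun r hr => neg_nonpos.2 <| mul_nonneg
      (div_nonneg (by linarith) (interior_subset hr)) (sq_nonneg _)

lemma hasDerivAt_pohozaev (hu : SolvesRadialODE d f u) (hf : Continuous f) (hr : 0 < r) :
    HasDerivAt (pohozaev d f u) (r ^ (d - 1) * pohozaevDensity d f (u r)) r := by
  have hu' := hu.hasDerivAt_deriv hr
  refine (hasDerivAt_rpow_mul (d - 1) hr ((((hasDerivAt_id r).mul (hu'.pow 2)).add
    (((hu.hasDerivAt r).mul hu').const_mul (d - 2))).add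
    (((hasDerivAt_id r).mul (hu.hasDerivAt_potential_comp hf r)).const_mul 2))).congr_deriv ?_
  simp only [pohozaevDensity, Pi.add_apply, Pi.mul_apply, Pi.pow_apply, id]
  push_cast
  field_simp
  ring

lemma continuous_pohozaev (hu : SolvesRadialODE d f u) (hf : Continuous f) (hd : 1 ≤ d) :
    Continuous (pohozaev d f u) := by
  have hpow : Continuous fun r : ℝ => r ^ (d - 1) := continuous_rpow_const (by linarith)
  have := hu.contDiff.continuous
  have := hu.contDiff_deriv.continuous
  have := continuous_potential hf
  unfold pohozaev
  fun_prop

end SolvesRadialODE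

/-- A ground state of the radial equation: a solution that is positive on `[0, ∞)`, tends to zero
at infinity, and starts below the height `M`. -/
structure IsGroundState (d : ℝ) (f : ℝ → ℝ) (M : ℝ) (u : ℝ → ℝ) : Prop
    extends SolvesRadialODE d f u where
  pos : ∀ r, 0 ≤ r → 0 < u r
  tendsto_zero : Tendsto u atTop (𝓝 0)
  apply_zero_lt : u 0 < M

namespace IsGroundState

variable {d r s α M : ℝ} {f u : ℝ → ℝ}

lemma radialEnergy_nonneg (hu : IsGroundState d f M u) (hf : Continuous f) (hd : 1 ≤ d)
    (hr : 0 ≤ r) : 0 ≤ radialEnergy f u r := by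
  have hlim : Tendsto (fun s => potential f (u s)) atTop (𝓝 0) := by
    have h := ((continuous_potential hf).tendsto 0).comp hu.tendsto_zero
    rwa [potential_zero] at h
  refine le_of_tendsto hlim ?_
  filter_upwards [eventually_ge_atTop r] with s hs
  calc potential f (u s) ≤ radialEnergy f u s := le_add_of_nonneg_left (by positivity)
    _ ≤ radialEnergy f u r := hu.antitoneOn_radialEnergy hf hd hr (hr.trans hs) hs

lemma threshold_lt_of_deriv_eq_zero (hu : IsGroundState d f M u) (hf : IsSerrinTang f α M)
    (hd : 1 ≤ d) (hr : 0 ≤ r) (hcrit : deriv u r = 0) : α < u r := by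
  refine hf.threshold_lt_of_potential_nonneg (hu.pos r hr) ?_
  simpa [radialEnergy, hcrit] using
    hu.radialEnergy_nonneg hf.differentiable.continuous hd hr

/-- At a critical point the nonnegative energy is purely potential, which forces `f(u) > 0`
there. Up to the first critical radius `u` is decreasing, hence `f(u) > 0` all the way and the
flux `r ^ (d - 1) u'` cannot have returned to zero. -/
lemma deriv_neg (hu : IsGroundState d f M u) (hf : IsSerrinTang f α M) (hd : 1 < d)
    (hr : 0 < r) : deriv u r < 0 := by
  have hstart : ∀ᶠ x in 𝓝[>] (0 : ℝ), deriv u x < 0 := by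
    have hf0 : 0 < f (u 0) := hf.pos_of_gt _
      ⟨hu.threshold_lt_of_deriv_eq_zero hf hd.le le_rfl hu.deriv_zero, hu.apply_zero_lt⟩
    have hev : ∀ᶠ x in 𝓝[>] (0 : ℝ), 0 < f (u x) :=
      ((hf.differentiable.continuous.comp hu.contDiff.continuous).continuousAt.eventually
        (lt_mem_nhds hf0)).filter_mono nhdsWithin_le_nhds
    obtain ⟨δ, hδ, hδpos⟩ := mem_nhdsGT_iff_exists_Ioo_subset.1 hev
    filter_upwards [Ioo_mem_nhdsGT hδ] with x hx
    exact hu.deriv_neg_of_forall_pos hd hx.1 fun z hz => hδpos ⟨hz.1, hz.2.trans hx.2⟩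
  by_contra! hr'
  obtain ⟨ρ, ⟨hρ, -⟩, hcrit, hneg⟩ :=
    exists_first_zero_of_eventually_neg hu.contDiff_deriv.continuous hr hstart hr'
  have hanti := hu.strictAntiOn_Icc_of_deriv_neg hneg
  have hαρ := hu.threshold_lt_of_deriv_eq_zero hf hd.le hρ.le hcrit
  refine (hu.deriv_neg_of_forall_pos hd hρ fun x hx => hf.pos_of_gt _ ⟨?_, ?_⟩).ne hcrit
  · exact hαρ.trans (hanti (Ioo_subset_Icc_self hx) (right_mem_Icc.2 hρ.le) hx.2)
  · exact (hanti (left_mem_Icc.2 hρ.le) (Ioo_subset_Icc_self hx) hx.1).trans hu.apply_zero_lt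

lemma strictAntiOn (hu : IsGroundState d f M u) (hf : IsSerrinTang f α M) (hd : 1 < d) :
    StrictAntiOn u (Ici 0) :=
  strictAntiOn_of_deriv_neg (convex_Ici 0) hu.contDiff.continuous.continuousOn
    fun _ hx => hu.deriv_neg hf hd (interior_Ici.subset hx)

lemma lt_height (hu : IsGroundState d f M u) (hf : IsSerrinTang f α M) (hd : 1 < d)
    (hr : 0 ≤ r) : u r < M :=
  ((hu.strictAntiOn hf hd).antitoneOn self_mem_Ici hr hr).trans_lt hu.apply_zero_lt

lemma exists_neg_le_flux (hu : IsGroundState d f M u) (hf : IsSerrinTang f α M) (hd : 1 < d) :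
    ∃ C > 0, ∀ᶠ r in atTop, -C ≤ r ^ (d - 1) * deriv u r := by
  obtain ⟨R, hR⟩ := eventually_atTop.1
    ((hu.tendsto_zero.eventually (gt_mem_nhds hf.threshold_pos)).and (eventually_gt_atTop 0))
  have hR0 : 0 < R := (hR R le_rfl).2
  have hmono : MonotoneOn (fun r => r ^ (d - 1) * deriv u r) (Ici R) := by
    refine monotoneOn_of_hasDerivWithinAt_nonneg (convex_Ici R)
      (hu.continuous_flux hd.le).continuousOn
      (f' := fun x => -(x ^ (d - 1) * f (u x))) (fun x hx => ?_) fun x hx => ?_ <;>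
    obtain ⟨hux, hx0⟩ := hR x (interior_subset hx)
    · exact (hu.hasDerivAt_flux hx0).hasDerivWithinAt
    · exact neg_nonneg.2 (mul_nonpos_of_nonneg_of_nonpos (rpow_nonneg hx0.le _)
        (hf.neg_of_lt _ ⟨hu.pos x hx0.le, hux⟩).le)
  refine ⟨-(R ^ (d - 1) * deriv u R), neg_pos.2 ?_, ?_⟩
  · exact mul_neg_of_pos_of_neg (rpow_pos_of_pos hR0 _) (hu.deriv_neg hf hd hR0)
  · filter_upwards [eventually_ge_atTop R] with r hr
    simpa only [neg_neg] using hmono self_mem_Ici hr hr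

lemma exists_mul_le_pohozaev (hu : IsGroundState d f M u) (hf : IsSerrinTang f α M)
    (hd : 2 ≤ d) : ∃ C, ∀ᶠ r in atTop, C * u r ≤ pohozaev d f u r := by
  obtain ⟨C, -, hC⟩ := hu.exists_neg_le_flux hf (by linarith)
  refine ⟨-((d - 2) * C), ?_⟩
  filter_upwards [hC, eventually_ge_atTop 0] with r hr hr0
  have henergy : 0 ≤ 2 * r * r ^ (d - 1) * radialEnergy f u r :=
    mul_nonneg (by positivity)
      (hu.radialEnergy_nonneg hf.differentiable.continuous (by linarith) hr0)
  have hflux : 0 ≤ (d - 2) * u r * (r ^ (d - 1) * deriv u r + C) :=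
    mul_nonneg (mul_nonneg (by linarith) (hu.pos r hr0).le) (by linarith)
  calc -((d - 2) * C) * u r ≤ 2 * r * r ^ (d - 1) * radialEnergy f u r
        + (d - 2) * u r * (r ^ (d - 1) * deriv u r + C) - (d - 2) * C * u r := by linarith
    _ = pohozaev d f u r := by
      rw [pohozaev, radialEnergy]
      ring

/-- Along `u` the Pohozaev density changes sign at most once, from nonnegative to negative, so
the Pohozaev functional first increases and then decreases; it vanishes at `0` and is
asymptotically nonnegative at infinity. -/
lemma pohozaev_nonneg (hu : IsGroundState d f M u) (hf : IsSerrinTang f α M) (hd : 2 ≤ d)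
    (hr : 0 < r) : 0 ≤ pohozaev d f u r := by
  have hfc := hf.differentiable.continuous
  have hcont := hu.continuous_pohozaev hfc (by linarith)
  have hanti := hu.strictAntiOn hf (by linarith)
  rcases le_or_gt 0 (pohozaevDensity d f (u r)) with hdens | hdens
  · have hmono : MonotoneOn (pohozaev d f u) (Icc 0 r) := by
      refine monotoneOn_of_hasDerivWithinAt_nonneg (convex_Icc 0 r) hcont.continuousOn
        (f' := fun x => x ^ (d - 1) * pohozaevDensity d f (u x)) (fun x hx => ?_)
        fun x hx => ?_ <;>
      replace hx := interior_Icc.subset hx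
      · exact (hu.hasDerivAt_pohozaev hfc hx.1).hasDerivWithinAt
      · exact mul_nonneg (rpow_nonneg hx.1.le _) <|
          hf.pohozaevDensity_nonneg_of_le hd (hu.pos r hr.le)
            (hanti hx.1.le hr.le hx.2).le (hu.lt_height hf (by linarith) hx.1.le) hdens
    have hzero : pohozaev d f u 0 = 0 := by
      rw [pohozaev, zero_rpow (by linarith), zero_mul]
    exact hzero.ge.trans (hmono (left_mem_Icc.2 hr.le) (right_mem_Icc.2 hr.le) hr.le)
  · have hmono : AntitoneOn (pohozaev d f u) (Ici r) := by
      refine antitoneOn_of_hasDerivWithinAt_nonpos (convex_Ici r) hcont.continuousOn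
        (f' := fun x => x ^ (d - 1) * pohozaevDensity d f (u x)) (fun x hx => ?_)
        fun x hx => ?_ <;>
      replace hx : r < x := interior_Ici.subset hx
      · exact (hu.hasDerivAt_pohozaev hfc (hr.trans hx)).hasDerivWithinAt
      · refine mul_nonpos_of_nonneg_of_nonpos (rpow_nonneg (hr.trans hx).le _) ?_
        by_contra! hpos
        exact hdens.not_ge <| hf.pohozaevDensity_nonneg_of_le hd (hu.pos x (hr.trans hx).le)
          (hanti hr.le (hr.trans hx).le hx).le (hu.lt_height hf (by linarith) hr.le) hpos.le
    obtain ⟨C, hC⟩ := hu.exists_mul_le_pohozaev hf hd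
    have hlim : Tendsto (fun s => C * u s) atTop (𝓝 0) := by
      simpa using hu.tendsto_zero.const_mul C
    refine le_of_tendsto hlim ?_
    filter_upwards [hC, eventually_ge_atTop r] with s hs hrs
    exact hs.trans (hmono self_mem_Ici hrs hrs)

lemma antitoneOn_mul_logDeriv (hu : IsGroundState d f M u) (hf : IsSerrinTang f α M)
    (hd : 2 ≤ d) (hs : 0 ≤ s) (hpot : ∀ z ∈ Ioo 0 (u s), 2 * potential f z ≤ z * f z) :
    AntitoneOn (fun r => r * logDeriv u r) (Ici s) := by
  have hderiv (x : ℝ) (hx : 0 < x) : HasDerivAt (fun r => r * logDeriv u r)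
      (-(x * deriv u x ^ 2 + (d - 2) * (u x * deriv u x) + x * (u x * f (u x))) / u x ^ 2)
      x := by
    have hux := (hu.pos x hx.le).ne'
    refine ((hasDerivAt_id x).mul
      ((hu.hasDerivAt_deriv hx).div (hu.hasDerivAt x) hux)).congr_deriv ?_
    simp only [id, Pi.div_apply]
    field_simp
    ring
  have hcont : ContinuousOn (fun r => r * logDeriv u r) (Ici s) :=
    continuousOn_id.mul (hu.contDiff_deriv.continuous.continuousOn.div
      hu.contDiff.continuous.continuousOn fun x hx => (hu.pos x (hs.trans hx)).ne')
  refine antitoneOn_of_hasDerivWithinAt_nonpos (convex_Ici s) hcont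
    (fun x hx => (hderiv x (hs.trans_lt (interior_Ici.subset hx))).hasDerivWithinAt)
    fun x hx => div_nonpos_of_nonpos_of_nonneg (neg_nonpos.2 ?_) (sq_nonneg _)
  replace hx : s < x := interior_Ici.subset hx
  have hx0 := hs.trans_lt hx
  have hpohozaev := nonneg_of_mul_nonneg_right (hu.pohozaev_nonneg hf hd hx0)
    (rpow_pos_of_pos hx0 _)
  have hpot_le := hpot (u x) ⟨hu.pos x hx0.le, hu.strictAntiOn hf (by linarith) hs hx0.le hx⟩
  nlinarith

end IsGroundState

namespace SolvesLinearizedODE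

variable {d r s t c α M : ℝ} {f u v : ℝ → ℝ}

lemma hasDerivAt_radialWronskian_deriv (hv : SolvesLinearizedODE d f u v)
    (hu : SolvesRadialODE d f u) (hf : DifferentiableAt ℝ f (u r)) (hr : 0 < r) :
    HasDerivAt (radialWronskian d (deriv u) v)
      (-(r ^ (d - 1) * ((d - 1) / r ^ 2 * (deriv u r * v r)))) r := by
  refine (hasDerivAt_radialWronskian hr (hu.contDiff.differentiable_deriv_two r)
    (hu.hasDerivAt_deriv_deriv hf hr).differentiableAt
    (hv.contDiff.differentiable two_ne_zero r)
    (hv.contDiff.differentiable_deriv_two r)).congr_deriv ?_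
  rw [hu.radialLaplacian_deriv hf hr, eq_neg_of_add_eq_zero_left (hv.radialLaplacian_add r hr)]
  ring

lemma hasDerivAt_radialWronskian_scalingGenerator (hv : SolvesLinearizedODE d f u v)
    (hu : SolvesRadialODE d f u) (hf : DifferentiableAt ℝ f (u r)) (c : ℝ) (hr : 0 < r) :
    HasDerivAt (radialWronskian d (scalingGenerator c u) v)
      (-(r ^ (d - 1) * ((c * (u r * deriv f (u r)) - (c + 2) * f (u r)) * v r))) r := by
  refine (hasDerivAt_radialWronskian hr
    ((hu.contDiff_scalingGenerator c).differentiable one_ne_zero r)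
    (hu.hasDerivAt_deriv_scalingGenerator hf c hr).differentiableAt
    (hv.contDiff.differentiable two_ne_zero r)
    (hv.contDiff.differentiable_deriv_two r)).congr_deriv ?_
  rw [hu.radialLaplacian_scalingGenerator hf c hr,
    eq_neg_of_add_eq_zero_left (hv.radialLaplacian_add r hr), scalingGenerator]
  ring

lemma radialWronskian_scalingGenerator_strictMonoOn (hv : SolvesLinearizedODE d f u v)
    (hu : SolvesRadialODE d f u) (hf : Differentiable ℝ f) (hd : 1 ≤ d) (hs : 0 ≤ s)
    (hneg : ∀ x ∈ Ioo s t, (c * (u x * deriv f (u x)) - (c + 2) * f (u x)) * v x < 0) :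
    StrictMonoOn (radialWronskian d (scalingGenerator c u) v) (Icc s t) := by
  refine strictMonoOn_of_hasDerivWithinAt_pos (convex_Icc s t)
    (continuous_radialWronskian hd (hu.contDiff_scalingGenerator c)
      (hv.contDiff.of_le one_le_two)).continuousOn
    (f' := fun x => -(x ^ (d - 1) * ((c * (u x * deriv f (u x)) - (c + 2) * f (u x)) * v x)))
    (fun x hx => ?_) fun x hx => ?_ <;>
  replace hx := interior_Icc.subset hx <;>
  have hx0 := hs.trans_lt hx.1
  · exact (hv.hasDerivAt_radialWronskian_scalingGenerator hu (hf _) c hx0).hasDerivWithinAt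
  · exact neg_pos.2 (mul_neg_of_pos_of_neg (rpow_pos_of_pos hx0 _) (hneg x hx))

lemma radialWronskian_deriv_strictMonoOn (hv : SolvesLinearizedODE d f u v)
    (hu : IsGroundState d f M u) (hf : IsSerrinTang f α M) (hd : 1 < d)
    (hpos : ∀ x ∈ Ioo 0 r, 0 < v x) :
    StrictMonoOn (radialWronskian d (deriv u) v) (Icc 0 r) := by
  refine strictMonoOn_of_hasDerivWithinAt_pos (convex_Icc 0 r)
    (continuous_radialWronskian hd.le hu.contDiff_deriv
      (hv.contDiff.of_le one_le_two)).continuousOn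
    (f' := fun x => -(x ^ (d - 1) * ((d - 1) / x ^ 2 * (deriv u x * v x))))
    (fun x hx => ?_) fun x hx => ?_ <;>
  replace hx := interior_Icc.subset hx
  · exact (hv.hasDerivAt_radialWronskian_deriv hu.toSolvesRadialODE
      (hf.differentiable _) hx.1).hasDerivWithinAt
  · have hx0 := hx.1
    exact neg_pos.2 <| mul_neg_of_pos_of_neg (rpow_pos_of_pos hx0 _) <|
      mul_neg_of_pos_of_neg (div_pos (sub_pos.2 hd) (by positivity)) <|
        mul_neg_of_neg_of_pos (hu.deriv_neg hf hd hx0) (hpos x hx)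

lemma radialWronskian_deriv_pos (hv : SolvesLinearizedODE d f u v)
    (hu : IsGroundState d f M u) (hf : IsSerrinTang f α M) (hd : 1 < d) (hr : 0 < r)
    (hpos : ∀ x ∈ Ioo 0 r, 0 < v x) : 0 < radialWronskian d (deriv u) v r := by
  simpa only [radialWronskian_zero hd] using hv.radialWronskian_deriv_strictMonoOn hu hf hd hpos
    (left_mem_Icc.2 hr.le) (right_mem_Icc.2 hr.le) hr

lemma hasDerivAt_div_deriv (hv : SolvesLinearizedODE d f u v) (hu : SolvesRadialODE d f u)
    (hr : 0 < r) (hu' : deriv u r ≠ 0) :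
    HasDerivAt (fun x => v x / deriv u x)
      (radialWronskian d (deriv u) v r / (r ^ (d - 1) * deriv u r ^ 2)) r := by
  have hpow := (rpow_pos_of_pos hr (d - 1)).ne'
  refine ((hv.contDiff.differentiable two_ne_zero r).hasDerivAt.div
    (hu.contDiff.differentiable_deriv_two r).hasDerivAt hu').congr_deriv ?_
  rw [radialWronskian]
  field_simp

/-- While `v` is positive, `(v / u')' = W / (r ^ (d - 1) u' ^ 2)` with an increasing Wronskian
`W > 0` and a bounded flux `r ^ (d - 1) u'`, so `v / u'` grows at least linearly; but it is
negative. -/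
lemma exists_nonpos (hv : SolvesLinearizedODE d f u v) (hu : IsGroundState d f M u)
    (hf : IsSerrinTang f α M) (hd : 1 < d) : ∃ r > 0, v r ≤ 0 := by
  by_contra! hpos
  obtain ⟨C, hC, hflux⟩ := hu.exists_neg_le_flux hf hd
  obtain ⟨R, hR⟩ := eventually_atTop.1 (hflux.and (eventually_ge_atTop 1))
  have hR1 : 1 ≤ R := (hR R le_rfl).2
  let W := radialWronskian d (deriv u) v
  have hWR : 0 < W R := hv.radialWronskian_deriv_pos hu hf hd (by linarith) fun x hx => hpos x hx.1
  have hderiv (x : ℝ) (hx : x ∈ Ici R) : HasDerivAt (fun r => v r / deriv u r)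
      (W x / (x ^ (d - 1) * deriv u x ^ 2)) x := by
    have hx0 : 0 < x := by linarith [mem_Ici.1 hx]
    exact hv.hasDerivAt_div_deriv hu.toSolvesRadialODE hx0 (hu.deriv_neg hf hd hx0).ne
  have hgrowth (x : ℝ) (hx : x ∈ Ici R) :
      W R / C ^ 2 ≤ W x / (x ^ (d - 1) * deriv u x ^ 2) := by
    obtain ⟨hfluxx, hx1⟩ := hR x hx
    have hx0 : 0 < x := by linarith
    have hu' := hu.deriv_neg hf hd hx0
    have hxd : 1 ≤ x ^ (d - 1) := one_le_rpow hx1 (by linarith)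
    have hWx : W R ≤ W x := (hv.radialWronskian_deriv_strictMonoOn hu hf hd
      fun z hz => hpos z hz.1).monotoneOn ⟨by linarith, hx⟩ ⟨hx0.le, le_rfl⟩ hx
    have hfluxx_neg : x ^ (d - 1) * deriv u x < 0 := mul_neg_of_pos_of_neg (by linarith) hu'
    refine div_le_div₀ (hWR.le.trans hWx) hWx (by nlinarith [sq_pos_of_neg hu']) ?_
    calc x ^ (d - 1) * deriv u x ^ 2 ≤ x ^ (d - 1) * (x ^ (d - 1) * deriv u x ^ 2) :=
          le_mul_of_one_le_left (by positivity) hxd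
      _ = (x ^ (d - 1) * deriv u x) ^ 2 := by ring
      _ ≤ C ^ 2 := sq_le_sq' hfluxx (by linarith)
  obtain ⟨x, hx, hquot⟩ := exists_pos_of_le_deriv (by positivity) hderiv hgrowth
  have hx0 : 0 < x := by linarith
  exact hquot.not_gt (div_neg_of_pos_of_neg (hpos x hx0) (hu.deriv_neg hf hd hx0))

lemma exists_first_zero (hv : SolvesLinearizedODE d f u v) (hu : IsGroundState d f M u)
    (hf : IsSerrinTang f α M) (hd : 1 < d) (hv0 : 0 < v 0) :
    ∃ r > 0, v r = 0 ∧ ∀ x ∈ Ioo 0 r, 0 < v x := by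
  obtain ⟨s, hs, hvs⟩ := hv.exists_nonpos hu hf hd
  have hstart : ∀ᶠ x in 𝓝[>] (0 : ℝ), -v x < 0 := by
    filter_upwards [(hv.contDiff.continuous.continuousAt.eventually
      (lt_mem_nhds hv0)).filter_mono nhdsWithin_le_nhds] with x hx using neg_neg_of_pos hx
  obtain ⟨r, hr, hvr, hneg⟩ := exists_first_zero_of_eventually_neg
    hv.contDiff.continuous.neg hs hstart (neg_nonneg.2 hvs)
  exact ⟨r, hr.1, neg_eq_zero.1 hvr, fun x hx => neg_lt_zero.1 (hneg x hx)⟩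

lemma deriv_neg_of_first_zero (hv : SolvesLinearizedODE d f u v)
    (hu : IsGroundState d f M u) (hf : IsSerrinTang f α M) (hd : 1 < d) (hr : 0 < r)
    (hvr : v r = 0) (hpos : ∀ x ∈ Ioo 0 r, 0 < v x) : deriv v r < 0 := by
  have hW := hv.radialWronskian_deriv_pos hu hf hd hr hpos
  rw [radialWronskian, hvr, mul_zero, sub_zero] at hW
  exact neg_of_mul_pos_right (pos_of_mul_pos_right hW (rpow_nonneg hr.le _))
    (hu.deriv_neg hf hd hr).le

/-- Otherwise single crossing would make the Wronskian of `r u' + c u` and `v` strictly monotone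
on `[0, r]`, although it vanishes at both ends. -/
lemma lt_mul_deriv_of_first_zero (hv : SolvesLinearizedODE d f u v)
    (hu : IsGroundState d f M u) (hf : IsSerrinTang f α M) (hd : 1 < d) (hr : 0 < r)
    (hvr : v r = 0) (hpos : ∀ x ∈ Ioo 0 r, 0 < v x) (hc : 0 ≤ c)
    (hgen : scalingGenerator c u r = 0) :
    (c + 2) * f (u r) < c * (u r * deriv f (u r)) := by
  by_contra! hle
  have hmono : StrictMonoOn (radialWronskian d (scalingGenerator c u) v) (Icc 0 r) := by
    refine hv.radialWronskian_scalingGenerator_strictMonoOn hu.toSolvesRadialODE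
      hf.differentiable hd.le le_rfl fun x hx => ?_
    have hcross := hf.single_crossing hc (by linarith) (hu.pos r hr.le)
      (hu.strictAntiOn hf hd hx.1.le hr.le hx.2) (hu.lt_height hf hd hx.1.le) hle
    exact mul_neg_of_neg_of_pos (sub_neg.2 hcross) (hpos x hx)
  have hlt := hmono (left_mem_Icc.2 hr.le) (right_mem_Icc.2 hr.le) hr
  rw [radialWronskian_zero hd, radialWronskian, hgen, hvr] at hlt
  simp at hlt

lemma scalingGenerator_pos_of_next_zero (hv : SolvesLinearizedODE d f u v)
    (hu : IsGroundState d f M u) (hf : IsSerrinTang f α M) (hd : 1 < d) (hr : 0 < r)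
    (hrs : r < s) (hvr : v r = 0) (hvs : v s = 0) (hneg : ∀ x ∈ Ioo r s, v x < 0)
    (hgen : scalingGenerator c u r = 0)
    (hlt : ∀ z ∈ Ioo 0 (u r), (c + 2) * f z < c * (z * deriv f z)) :
    0 < scalingGenerator c u s := by
  have hmono : StrictMonoOn (radialWronskian d (scalingGenerator c u) v) (Icc r s) := by
    refine hv.radialWronskian_scalingGenerator_strictMonoOn hu.toSolvesRadialODE
      hf.differentiable hd.le hr.le fun x hx => ?_
    have hx0 := hr.trans hx.1
    have hux := hlt (u x) ⟨hu.pos x hx0.le, hu.strictAntiOn hf hd hr.le hx0.le hx.1⟩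
    exact mul_neg_of_pos_of_neg (sub_pos.2 hux) (hneg x hx)
  have hW := hmono (left_mem_Icc.2 hrs.le) (right_mem_Icc.2 hrs.le) hrs
  simp only [radialWronskian, hgen, hvr, hvs, zero_mul, mul_zero, sub_zero] at hW
  exact pos_of_mul_pos_left (pos_of_mul_pos_right hW (rpow_nonneg (hr.trans hrs).le _))
    (deriv_nonneg_of_forall_Ioo_neg hrs hvs hneg)

/-- The choice `c = -r u'(r) / u(r)` makes `r u' + c u` vanish at the first zero `r` of `v`. At
the next zero `r u' + c u` would be positive by the Wronskian with `v`, but nonpositive since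
`r u' / u` is antitone beyond `r`. -/
lemma ne_zero_of_first_zero_lt (hv : SolvesLinearizedODE d f u v)
    (hu : IsGroundState d f M u) (hf : IsSerrinTang f α M) (hd : 2 ≤ d) (hr : 0 < r)
    (hvr : v r = 0) (hpos : ∀ x ∈ Ioo 0 r, 0 < v x) (hrt : r < t) : v t ≠ 0 := by
  intro hvt
  have hd1 : 1 < d := by linarith
  obtain ⟨s, ⟨hrs, -⟩, hvs, hneg⟩ := exists_first_zero_of_eventually_neg
    hv.contDiff.continuous hrt (eventually_neg_nhdsGT_of_deriv_neg hvr
      (hv.deriv_neg_of_first_zero hu hf hd1 hr hvr hpos)) hvt.ge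
  have hur := hu.pos r hr.le
  have hs := hr.trans hrs
  obtain ⟨c, hc⟩ : ∃ c, c = -(r * logDeriv u r) := ⟨_, rfl⟩
  have hc0 : 0 < c := hc ▸ neg_pos.2 (mul_neg_of_pos_of_neg hr
    (div_neg_of_neg_of_pos (hu.deriv_neg hf hd1 hr) hur))
  have hgen : scalingGenerator c u r = 0 := by
    rw [scalingGenerator_eq_mul hur.ne', hc, add_neg_cancel, zero_mul]
  have hlt := hv.lt_mul_deriv_of_first_zero hu hf hd1 hr hvr hpos hc0.le hgen
  have hurM : u r < M := hu.lt_height hf hd1 hr.le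
  have hpot (z : ℝ) (hz : z ∈ Ioo 0 (u r)) : 2 * potential f z ≤ z * f z :=
    two_mul_potential_le_mul hf.differentiable hz.1.le fun x hx =>
      hf.le_mul_deriv_of_lt hc0.le (by linarith) hx.1 (hx.2.trans hz.2) hurM hlt
  have hle : s * logDeriv u s ≤ r * logDeriv u r :=
    hu.antitoneOn_mul_logDeriv hf hd hr.le hpot self_mem_Ici hrs.le hrs.le
  have hgen_pos : 0 < scalingGenerator c u s :=
    hv.scalingGenerator_pos_of_next_zero hu hf hd1 hr hrs hvr hvs hneg hgen fun z hz =>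
      hf.mul_lt_mul_deriv_of_lt hc0.le (by linarith) hz.1 hz.2 hurM hlt
  rw [scalingGenerator_eq_mul (hu.pos s hs.le).ne'] at hgen_pos
  exact hgen_pos.not_ge (mul_nonpos_of_nonpos_of_nonneg (by linarith) (hu.pos s hs.le).le)

end SolvesLinearizedODE

theorem linearized_solution_vanishes_once_general {d α M : ℝ} {f u v : ℝ → ℝ} (hd : 2 ≤ d)
    (hf : IsSerrinTang f α M) (hu : IsGroundState d f M u) (hv : SolvesLinearizedODE d f u v)
    (hv0 : 0 < v 0) : ∃! r : ℝ, 0 < r ∧ v r = 0 := by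
  obtain ⟨r, hr, hvr, hpos⟩ := hv.exists_first_zero hu hf (by linarith) hv0
  refine ⟨r, ⟨hr, hvr⟩, fun s ⟨hs, hvs⟩ => ?_⟩
  rcases lt_trichotomy s r with hsr | rfl | hrs
  · exact absurd hvs (hpos s ⟨hs, hsr⟩).ne'
  · rfl
  · exact absurd hvs (hv.ne_zero_of_first_zero_lt hu hf hd hr hvr hpos hrs)

section Trigonometry

variable {z : ℝ}

lemma mul_cos_lt_sin (hz : z ∈ Ioo 0 π) : z * cos z < sin z := by
  rcases lt_or_ge z (π / 2) with hlt | hge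
  · have hcos : 0 < cos z := cos_pos_of_mem_Ioo ⟨by linarith [hz.1, pi_pos], hlt⟩
    have := lt_tan hz.1 hlt
    rwa [tan_eq_sin_div_cos, lt_div_iff₀ hcos] at this
  · have hcos : cos z ≤ 0 := cos_nonpos_of_pi_div_two_le_of_le hge (by linarith [hz.2])
    exact (mul_nonpos_of_nonneg_of_nonpos hz.1.le hcos).trans_lt (sin_pos_of_mem_Ioo hz)

lemma strictAntiOn_mul_cot : StrictAntiOn (fun z => z * cot z) (Ioo 0 π) := by
  have hderiv (z : ℝ) (hz : z ∈ Ioo 0 π) :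
      HasDerivAt (fun z => z * cot z) (-(z - sin z * cos z) / sin z ^ 2) z := by
    have hsin := (sin_pos_of_mem_Ioo hz).ne'
    simp only [cot_eq_cos_div_sin]
    refine ((hasDerivAt_id z).mul ((hasDerivAt_cos z).div (hasDerivAt_sin z) hsin)).congr_deriv ?_
    simp only [id, Pi.div_apply]
    field_simp
    linear_combination -z * sin_sq_add_cos_sq z
  refine strictAntiOn_of_hasDerivWithinAt_neg (convex_Ioo 0 π)
    (fun z hz => (hderiv z hz).continuousAt.continuousWithinAt)
    (fun z hz => (hderiv z (interior_subset hz)).hasDerivWithinAt) fun z hz => ?_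
  replace hz := interior_subset hz
  have hlt : sin (2 * z) < 2 * z := sin_lt (by linarith [hz.1])
  rw [sin_two_mul] at hlt
  exact div_neg_of_neg_of_pos (by linarith) (pow_pos (sin_pos_of_mem_Ioo hz) 2)

end Trigonometry

section Fnl

variable {a b z : ℝ}

lemma hasDerivAt_Fnl (a b z : ℝ) :
    HasDerivAt (Fnl a b)
      (a * cos (2 * z) * (sin z ^ 2 - b / a) + a / 2 * sin (2 * z) * (2 * (sin z * cos z))) z := by
  have hsin_two : HasDerivAt (fun x => sin (2 * x)) (cos (2 * z) * 2) z := by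
    simpa using ((hasDerivAt_id z).const_mul 2).sin
  refine ((hsin_two.const_mul (a / 2)).mul
    (((hasDerivAt_sin z).pow 2).sub_const (b / a))).congr_deriv ?_
  simp only [Pi.pow_apply]
  push_cast
  ring

lemma arcsin_sqrt_lt_iff (hba : 0 ≤ b / a) (hz : z ∈ Ioc 0 (π / 2)) :
    arcsin √(b / a) < z ↔ b / a < sin z ^ 2 := by
  rw [arcsin_lt_iff_lt_sin' ⟨by linarith [hz.1, pi_pos], hz.2⟩, sqrt_lt hba
    (sin_nonneg_of_nonneg_of_le_pi hz.1.le (by linarith [hz.2, pi_pos]))]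

lemma mul_logDeriv_Fnl (ha : a ≠ 0) (hz : z ∈ Ioo 0 (π / 2)) (hsin : b / a < sin z ^ 2) :
    z * logDeriv (Fnl a b) z
      = 2 * z * cot (2 * z) + 2 * (z * cot z) * (1 + b / a / (sin z ^ 2 - b / a)) := by
  have hs : sin z ≠ 0 := (sin_pos_of_mem_Ioo ⟨hz.1, by linarith [hz.2, pi_pos]⟩).ne'
  have hs2 : sin (2 * z) ≠ 0 :=
    (sin_pos_of_mem_Ioo ⟨by linarith [hz.1], by linarith [hz.2]⟩).ne'
  have hden : sin z ^ 2 - b / a ≠ 0 := (sub_pos.2 hsin).ne'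
  rw [logDeriv_apply, (hasDerivAt_Fnl a b z).deriv, Fnl, cot_eq_cos_div_sin, cot_eq_cos_div_sin]
  generalize b / a = β, sin (2 * z) = S, cos (2 * z) = C at *
  field_simp
  ring

/-- Each summand of `mul_logDeriv_Fnl` is strictly decreasing, since `z cot z` is and the last
factor is positive and decreasing. -/
lemma strictAntiOn_mul_logDeriv_Fnl (hb : 0 < b) (ha : 0 < a) :
    StrictAntiOn (fun z => z * logDeriv (Fnl a b) z) (Ioo (arcsin √(b / a)) (π / 2)) := by
  have hba : 0 < b / a := div_pos hb ha
  have hα : 0 ≤ arcsin √(b / a) := arcsin_nonneg.2 (sqrt_nonneg _)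
  intro x hx y hy hxy
  have hx0 : 0 < x := hα.trans_lt hx.1
  have hy0 : 0 < y := hα.trans_lt hy.1
  have hsinx := (arcsin_sqrt_lt_iff hba.le ⟨hx0, hx.2.le⟩).1 hx.1
  have hsiny := (arcsin_sqrt_lt_iff hba.le ⟨hy0, hy.2.le⟩).1 hy.1
  have hsin : sin x < sin y := sin_lt_sin_of_lt_of_le_pi_div_two (by linarith [pi_pos]) hy.2.le hxy
  have hsinx0 : 0 < sin x := sin_pos_of_mem_Ioo ⟨hx0, by linarith [hx.2]⟩
  have hcot : y * cot y < x * cot x :=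
    strictAntiOn_mul_cot ⟨hx0, by linarith [hx.2]⟩ ⟨hy0, by linarith [hy.2]⟩ hxy
  have hcot_two : 2 * y * cot (2 * y) < 2 * x * cot (2 * x) :=
    strictAntiOn_mul_cot ⟨by linarith, by linarith [hx.2]⟩ ⟨by linarith, by linarith [hy.2]⟩
      (by linarith)
  have hcoty : 0 < y * cot y := by
    rw [cot_eq_cos_div_sin]
    have hcos : 0 < cos y := cos_pos_of_mem_Ioo ⟨by linarith [pi_pos], hy.2⟩
    exact mul_pos hy0 (div_pos hcos (hsinx0.trans hsin))
  have hfactor : 1 + b / a / (sin y ^ 2 - b / a) < 1 + b / a / (sin x ^ 2 - b / a) := by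
    have := sub_pos.2 hsinx
    gcongr
  have hfactor_pos : 0 < 1 + b / a / (sin y ^ 2 - b / a) := by
    have := div_pos hba (sub_pos.2 hsiny)
    positivity
  simp only [mul_logDeriv_Fnl ha.ne' ⟨hx0, hx.2⟩ hsinx,
    mul_logDeriv_Fnl ha.ne' ⟨hy0, hy.2⟩ hsiny]
  exact add_lt_add hcot_two (mul_lt_mul'' (mul_lt_mul_of_pos_left hcot two_pos) hfactor
    (by positivity) hfactor_pos.le)

lemma Fnl_lt_mul_deriv (ha : 0 < a) (hz : z ∈ Ioo 0 (π / 2)) (hsin : sin z ^ 2 ≤ b / a) :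
    Fnl a b z < z * deriv (Fnl a b) z := by
  have hs : 0 < sin z := sin_pos_of_mem_Ioo ⟨hz.1, by linarith [hz.2, pi_pos]⟩
  have hc : 0 < cos z := cos_pos_of_mem_Ioo ⟨by linarith [hz.1, pi_pos], hz.2⟩
  have hs2 : 0 < sin (2 * z) := sin_pos_of_mem_Ioo ⟨by linarith [hz.1], by linarith [hz.2]⟩
  have hcos : 2 * z * cos (2 * z) < sin (2 * z) :=
    mul_cos_lt_sin ⟨by linarith [hz.1], by linarith [hz.2]⟩
  have hfirst : 0 ≤ a / 2 * (b / a - sin z ^ 2) * (sin (2 * z) - 2 * z * cos (2 * z)) :=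
    mul_nonneg (mul_nonneg (by positivity) (by linarith)) (by linarith)
  have hsecond : 0 < a * z * sin z * cos z * sin (2 * z) := by
    have := hz.1
    positivity
  rw [(hasDerivAt_Fnl a b z).deriv, Fnl]
  linarith

lemma isSerrinTang_Fnl (hb : 0 < b) (hab : b < a) :
    IsSerrinTang (Fnl a b) (arcsin √(b / a)) (π / 2) := by
  have ha : 0 < a := hb.trans hab
  have hba : 0 < b / a := div_pos hb ha
  have hα : 0 < arcsin √(b / a) := arcsin_pos.2 (sqrt_pos.2 hba)
  have hsqrt : √(b / a) < 1 := (sqrt_lt' one_pos).2 (by rwa [one_pow, div_lt_one ha])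
  have hα_lt : arcsin √(b / a) < π / 2 := arcsin_lt_pi_div_two.2 hsqrt
  have hlt_iff {z : ℝ} (hz : 0 < z) (hz' : z < π / 2) :=
    arcsin_sqrt_lt_iff hba.le ⟨hz, hz'.le⟩
  have hsin_two {z : ℝ} (hz : 0 < z) (hz' : z < π / 2) : 0 < a / 2 * sin (2 * z) :=
    mul_pos (half_pos ha) (sin_pos_of_mem_Ioo ⟨by linarith, by linarith⟩)
  exact
  { differentiable := fun z => (hasDerivAt_Fnl a b z).differentiableAt
    threshold_pos := hα
    apply_threshold := by
      rw [Fnl, sin_arcsin (by linarith [sqrt_nonneg (b / a)]) hsqrt.le, sq_sqrt hba.le, sub_self,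
        mul_zero]
    neg_of_lt := fun z hz => by
      have hz' := hz.2.trans hα_lt
      have hsin : 0 ≤ sin z := sin_nonneg_of_nonneg_of_le_pi hz.1.le (by linarith [pi_pos])
      have hlt : sin z ^ 2 < b / a := (lt_sqrt hsin).1
        ((lt_arcsin_iff_sin_lt' ⟨by linarith [hz.1, pi_pos], hz'⟩).1 hz.2)
      exact mul_neg_of_pos_of_neg (hsin_two hz.1 hz') (sub_neg.2 hlt)
    pos_of_gt := fun z hz => by
      have hz0 := hα.trans hz.1
      exact mul_pos (hsin_two hz0 hz.2) (sub_pos.2 ((hlt_iff hz0 hz.2).1 hz.1))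
    lt_mul_deriv := fun z hz => by
      have hz' := hz.2.trans_lt hα_lt
      have hsin : sin z ^ 2 ≤ b / a := not_lt.1 fun h => hz.2.not_gt ((hlt_iff hz.1 hz').2 h)
      exact Fnl_lt_mul_deriv ha ⟨hz.1, hz'⟩ hsin
    growth_strictAntiOn := strictAntiOn_mul_logDeriv_Fnl hb ha }

end Fnl

theorem linearized_solution_vanishes_once (d : ℕ) (hd : 2 ≤ d) (a b : ℝ)
    (hb : 0 < b) (hab : 2 * b < a)
    (u : ℝ → ℝ → ℝ) (hfam : IsShootingFamily d a b u)
    (y : ℝ) (hy : y ∈ Szero u)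
    (v : ℝ → ℝ) (hv : IsLinearizedSol d a b (u y) v) :
    ∃! r : ℝ, 0 < r ∧ v r = 0 := by
  obtain ⟨hy_mem, hpos, hlim⟩ := hy
  obtain ⟨⟨hu, hu0, hode⟩, huy⟩ := hfam y hy_mem
  obtain ⟨hv, hv0, -, hvode⟩ := hv
  exact linearized_solution_vanishes_once_general (by exact_mod_cast hd)
    (isSerrinTang_Fnl hb (by linarith)) ⟨⟨hu, hu0, hode⟩, hpos, hlim, huy.trans_lt hy_mem.2⟩
    ⟨hv, hvode⟩ (hv0 ▸ one_pos)
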